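/- For every even natural number n with n ≥ 4, the identity n!·2^{n/2} / (n·(n−1)(n−2)·∏_{j=1}^{(n−4)/2}(n − 2(1+j))) = 2^{n−1}·Γ((n−1)/2)/√π holds in ℝ, where Γ is the real Gamma function; equivalently, M₂(n) = (−1)^{(n+2)/2}·2^{n−1}·π^{−1/2}·Γ((n−1)/2). -/

import Mathlib

lemma aux_prod (k : ℕ) :
    ∏ j ∈ Finset.Icc 1 k, (((2 * k + 4 : ℕ) : ℝ) - 2 * (1 + (j : ℝ))) = 2 ^ k * (k.factorial : ℝ) := by
  have h : ∏ j ∈ Finset.Icc 1 k, (((2 * k + 4 : ℕ) : ℝ) - 2 * (1 + (j : ℝ)))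
      = ∏ i ∈ Finset.range k, (2 * ((i : ℝ) + 1)) := by
    refine Finset.prod_bij' (fun j _ => k - j) (fun i _ => k - i) ?_ ?_ ?_ ?_ ?_
    · intro j hj; simp only [Finset.mem_Icc, Finset.mem_range] at *; omega
    · intro j hj; simp only [Finset.mem_Icc, Finset.mem_range] at *; omega
    · intro j hj; simp only [Finset.mem_Icc] at *; omega
    · intro j hj; simp only [Finset.mem_range] at *; omega
    · intro j hj
      simp only [Finset.mem_Icc] at hj
      rw [Nat.cast_sub hj.2]; push_cast; ring
  rw [h, Finset.prod_mul_distrib, Finset.prod_const, Finset.card_range,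
    ← Finset.prod_range_add_one_eq_factorial]
  push_cast; rfl

lemma aux_gamma (k : ℕ) :
    Real.Gamma ((k : ℝ) + 3 / 2) * (2 ^ (2 * k + 1) * (k.factorial : ℝ))
      = ((2 * k + 1).factorial : ℝ) * Real.sqrt Real.pi := by
  induction k with
  | zero =>
    have : ((0 : ℕ) : ℝ) + 3 / 2 = 1 / 2 + 1 := by norm_num
    rw [this, Real.Gamma_add_one (by norm_num), Real.Gamma_one_half_eq]
    simp; ring
  | succ k ih =>
    have h : ((k + 1 : ℕ) : ℝ) + 3 / 2 = ((k : ℝ) + 3 / 2) + 1 := by push_cast; ring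
    rw [h, Real.Gamma_add_one (by positivity), show 2 * (k + 1) + 1 = (2 * k + 1) + 1 + 1 by ring,
      Nat.factorial_succ (2 * k + 1 + 1), Nat.factorial_succ (2 * k + 1), Nat.factorial_succ k]
    push_cast
    rw [pow_succ, pow_succ]
    linear_combination ((2 * (k : ℝ) + 3) * (2 * k + 2)) * ih

theorem stmt14 (n : ℕ) (hev : Even n) (hn : 4 ≤ n) :
    (Nat.factorial n : ℝ) * 2 ^ (n / 2) /
        ((n : ℝ) * ((n : ℝ) - 1) * ((n : ℝ) - 2) *
          ∏ j ∈ Finset.Icc 1 ((n - 4) / 2), ((n : ℝ) - 2 * (1 + (j : ℝ))))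
      = 2 ^ (n - 1) * Real.Gamma (((n : ℝ) - 1) / 2) / Real.sqrt Real.pi := by
  obtain ⟨k, rfl⟩ : ∃ k, n = 2 * k + 4 := by
    obtain ⟨m, rfl⟩ := hev
    exact ⟨m - 2, by omega⟩
  rw [show (2 * k + 4 - 4) / 2 = k by omega, show (2 * k + 4) / 2 = k + 2 by omega,
    show 2 * k + 4 - 1 = (2 * k + 1) + 2 by omega, aux_prod,
    show (((2 * k + 4 : ℕ) : ℝ) - 1) / 2 = (k : ℝ) + 3 / 2 by push_cast; ring]
  have hg := aux_gamma k
  have hpi : Real.sqrt Real.pi ≠ 0 := (Real.sqrt_pos.mpr Real.pi_pos).ne'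
  have hk : (k.factorial : ℝ) ≠ 0 := by exact_mod_cast k.factorial_ne_zero
  have hf : ((2 * k + 4).factorial : ℝ)
      = (2 * k + 4) * (2 * k + 3) * (2 * k + 2) * ((2 * k + 1).factorial : ℝ) := by
    rw [show 2 * k + 4 = 2 * k + 1 + 1 + 1 + 1 by ring, Nat.factorial_succ, Nat.factorial_succ,
      Nat.factorial_succ]
    push_cast; ring
  have e1 : ((2 * k + 4 : ℕ) : ℝ) - 1 = 2 * k + 3 := by push_cast; ring
  have e2 : ((2 * k + 4 : ℕ) : ℝ) - 2 = 2 * k + 2 := by push_cast; ring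
  have e0 : ((2 * k + 4 : ℕ) : ℝ) = 2 * k + 4 := by push_cast; ring
  rw [e1, e2, e0, hf, div_eq_div_iff (by positivity) hpi, pow_add, pow_add 2 (2 * k + 1) 2]
  linear_combination (-4 * (2 * (k : ℝ) + 4) * (2 * k + 3) * (2 * k + 2) * 2 ^ k) * hg
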